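/- For duplicate-free lists π_A, π_B over the finite type α, the set π_A ⊕ π_B equals the set of all lists obtained by filtering some complete ranking p that has both π_A and π_B as sublists to the entries of entries(π_A) ∪ entries(π_B); in symbols, π_A ⊕ π_B = ( E(π_A) ∩ E(π_B) | entries(π_A) ∪ entries(π_B) ). -/

import Mathlib

/-!
In a duplicate-free list `p`, a sublist `l` is determined by its set of entries: it is the
restriction of `p` to the entries of `l` (`filter_mem_eq_of_sublist`). Hence restricting a common
complete extension `p` to `entries(πA) ∪ entries(πB)`, and then to the entries of `πA` or `πB`,
gives back `πA` or `πB`. Conversely, a consistent combination `m` becomes a common complete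
extension when the objects missing from `m` are appended to it in any order, and restricting to
the entries of `m` removes them again.
-/

open scoped Classical

/-- `oplus πA πB` is the set of consistent combinations of `πA` and `πB`. -/
def oplus {α : Type*} [DecidableEq α] (πA πB : List α) : Set (List α) :=
  {m | m.Nodup ∧ (∀ x, x ∈ m ↔ x ∈ πA ∨ x ∈ πB) ∧
    m.filter (fun x => decide (x ∈ πA)) = πA ∧
    m.filter (fun x => decide (x ∈ πB)) = πB}

theorem filter_mem_eq_of_sublist {α : Type*} {l p : List α} [DecidablePred (· ∈ l)]
    (hp : p.Nodup) (h : l.Sublist p) : p.filter (fun x => decide (x ∈ l)) = l := by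
  have hs : l.Sublist (p.filter (fun x => decide (x ∈ l))) := by
    have h' := h.filter (fun x => decide (x ∈ l))
    rwa [List.filter_eq_self.2 (by simp)] at h'
  have hsub : (p.filter (fun x => decide (x ∈ l))).Subperm l :=
    (hp.filter _).subperm (fun x hx => by simpa using (List.mem_filter.1 hx).2)
  exact (hs.eq_of_length_le hsub.length_le).symm

/-- `πA ⊕ πB` equals the set of restrictions of the common linear
extensions of `πA` and `πB` to `entries(πA) ∪ entries(πB)`; in symbols,
`πA ⊕ πB = ( E(πA) ∩ E(πB) | entries(πA) ∪ entries(πB) )`. -/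
theorem oplus_eq_restricted_extensions {α : Type*} [Fintype α] [DecidableEq α]
    (πA πB : List α) (hA : πA.Nodup) (hB : πB.Nodup) :
    oplus πA πB =
      {l | ∃ p : List α, p.Nodup ∧ (∀ x : α, x ∈ p) ∧
        πA.Sublist p ∧ πB.Sublist p ∧
        l = p.filter (fun x => decide (x ∈ πA ∨ x ∈ πB))} := by
  ext m
  constructor
  · rintro ⟨hm, hmem, hmA, hmB⟩
    have hsA : πA.Sublist m := by
      have := List.filter_sublist (p := fun x => decide (x ∈ πA)) (l := m)
      rwa [hmA] at this
    have hsB : πB.Sublist m := by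
      have := List.filter_sublist (p := fun x => decide (x ∈ πB)) (l := m)
      rwa [hmB] at this
    -- The objects missing from `m`, in an arbitrary order.
    let r : List α := Finset.univ.toList.filter (fun x => decide (x ∉ m))
    have hr : ∀ x, x ∈ r ↔ x ∉ m := fun x => by simp [r]
    have hp : (m ++ r).Nodup :=
      hm.append ((Finset.nodup_toList _).filter _) (fun x hx hx' => (hr x).1 hx' hx)
    have hmp : m.Sublist (m ++ r) := List.sublist_append_left m r
    refine ⟨m ++ r, hp, fun x => ?_, hsA.trans hmp, hsB.trans hmp, ?_⟩
    · rw [List.mem_append, hr]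
      exact em _
    · simp only [← hmem]
      exact (filter_mem_eq_of_sublist hp hmp).symm
  · rintro ⟨p, hp, hall, hpA, hpB, rfl⟩
    refine ⟨hp.filter _, fun x => by simp [hall], ?_, ?_⟩
    · rw [List.filter_filter]
      refine Eq.trans (List.filter_congr fun x _ => ?_) (filter_mem_eq_of_sublist hp hpA)
      by_cases h : x ∈ πA <;> simp [h]
    · rw [List.filter_filter]
      refine Eq.trans (List.filter_congr fun x _ => ?_) (filter_mem_eq_of_sublist hp hpB)
      by_cases h : x ∈ πB <;> simp [h]
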